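/- Let f : ℝ^d → ℝ be differentiable and L-smooth with f* such that f(x) ≥ f* for all x. Fix a step size η_t with 0 < η_t ≤ 1/L, a point x_t ∈ ℝ^d, a vector g̃_t ∈ ℝ^d, and set x_{t+1} = x_t − η_t·g̃_t. Let θ_t = g̃_t − ∇f(x_t), and suppose θ_t = θ_t^u + θ_t^b for vectors θ_t^u, θ_t^b ∈ ℝ^d. With Δ_t = f(x_t) − f* and Δ_{t+1} = f(x_{t+1}) − f*, one has (η_t/2)·‖∇f(x_t)‖² ≤ Δ_t − Δ_{t+1} + L·η_t²·‖θ_t^u‖² + (L·η_t² − η_t)·⟨∇f(x_t), θ_t^u⟩ + (3η_t/2)·‖θ_t^b‖². -/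

import Mathlib

open scoped RealInnerProductSpace

/-- The descent lemma: a function whose gradient is `L`-Lipschitz is bounded above by its
first-order expansion plus `L / 2` times the squared distance. -/
theorem le_add_inner_gradient_add_sq {E : Type*} [NormedAddCommGroup E] [InnerProductSpace ℝ E]
    [CompleteSpace E] {f : E → ℝ} {L : ℝ} (hdiff : Differentiable ℝ f)
    (hsmooth : ∀ x y, ‖gradient f x - gradient f y‖ ≤ L * ‖x - y‖) (x v : E) :
    f (x + v) ≤ f x + ⟪gradient f x, v⟫ + L / 2 * ‖v‖ ^ 2 := by
  have hline (t : ℝ) :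
      HasDerivAt (fun s : ℝ => f (x + s • v)) ⟪gradient f (x + t • v), v⟫ t := by
    have hpath : HasDerivAt (fun s : ℝ => x + s • v) v t := by
      simpa using ((hasDerivAt_id t).smul_const v).const_add x
    exact (hdiff (x + t • v)).hasGradientAt.hasFDerivAt.comp_hasDerivAt t hpath
  have hbound (t : ℝ) :
      HasDerivAt (fun s : ℝ => f x + s * ⟪gradient f x, v⟫ + L / 2 * ‖v‖ ^ 2 * s ^ 2)
        (⟪gradient f x, v⟫ + L * t * ‖v‖ ^ 2) t := by
    have hlin := ((hasDerivAt_id t).mul_const ⟪gradient f x, v⟫).const_add (f x)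
    have hquad := (hasDerivAt_pow 2 t).const_mul (L / 2 * ‖v‖ ^ 2)
    refine (hlin.add hquad).congr_deriv ?_
    norm_num
    ring
  have hle : ∀ t ∈ Set.Ico (0 : ℝ) 1,
      ⟪gradient f (x + t • v), v⟫ ≤ ⟪gradient f x, v⟫ + L * t * ‖v‖ ^ 2 := by
    intro t ht
    have hlip := hsmooth (x + t • v) x
    rw [add_sub_cancel_left, norm_smul, Real.norm_of_nonneg ht.1] at hlip
    have hinner := real_inner_le_norm (gradient f (x + t • v) - gradient f x) v
    rw [inner_sub_left] at hinner
    nlinarith [mul_le_mul_of_nonneg_right hlip (norm_nonneg v)]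
  simpa using image_le_of_deriv_right_le_deriv_boundary
    (fun t _ => (hline t).continuousAt.continuousWithinAt)
    (fun t _ => (hline t).hasDerivWithinAt) (by simp)
    (fun t _ => (hbound t).continuousAt.continuousWithinAt)
    (fun t _ => (hbound t).hasDerivWithinAt) hle (Set.right_mem_Icc.2 zero_le_one)

/-- Per-iteration inequality for (clipped) SGD on non-convex smooth objectives. -/
theorem nonconvex_per_iteration_bound
    {d : ℕ} (f : EuclideanSpace ℝ (Fin d) → ℝ)
    (L : ℝ) (hL : 0 < L)
    (hdiff : Differentiable ℝ f)
    (hsmooth : ∀ x y, ‖gradient f x - gradient f y‖ ≤ L * ‖x - y‖)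
    (fstar : ℝ) (hfstar : ∀ x, fstar ≤ f x)
    (ηt : ℝ) (hη0 : 0 < ηt) (hη : ηt ≤ 1 / L)
    (xt gt xt1 : EuclideanSpace ℝ (Fin d)) (hupdate : xt1 = xt - ηt • gt)
    (θt θtu θtb : EuclideanSpace ℝ (Fin d))
    (hθ : θt = gt - gradient f xt) (hdecomp : θt = θtu + θtb) :
    ηt / 2 * ‖gradient f xt‖ ^ 2 ≤
      (f xt - fstar) - (f xt1 - fstar) + L * ηt ^ 2 * ‖θtu‖ ^ 2
        + (L * ηt ^ 2 - ηt) * ⟪gradient f xt, θtu⟫ + 3 * ηt / 2 * ‖θtb‖ ^ 2 := by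
  have hgt : gt = gradient f xt + θtu + θtb := by
    rw [add_assoc, ← hdecomp, hθ, add_sub_cancel]
  have hdescent := le_add_inner_gradient_add_sq hdiff hsmooth xt (-(ηt • gt))
  rw [← sub_eq_add_neg, ← hupdate, inner_neg_right, inner_smul_right, norm_neg, norm_smul,
    mul_pow, Real.norm_of_nonneg hη0.le, hgt] at hdescent
  have hLη : L * ηt ≤ 1 := by
    rwa [le_div_iff₀ hL, mul_comm] at hη
  generalize gradient f xt = G at hdescent ⊢
  have hG := mul_nonneg (mul_nonneg hη0.le (sub_nonneg.2 hLη)) (sq_nonneg ‖G + θtb‖)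
  have hu := mul_nonneg (mul_nonneg hη0.le (mul_pos hL hη0).le) (sq_nonneg ‖θtu - θtb‖)
  have hb := mul_nonneg (mul_nonneg hη0.le (by linarith : 0 ≤ 2 - L * ηt)) (sq_nonneg ‖θtb‖)
  rw [norm_add_sq_real] at hG
  rw [norm_sub_sq_real] at hu
  rw [norm_add_sq_real, norm_add_sq_real, inner_add_left, inner_add_right, inner_add_right,
    real_inner_self_eq_norm_sq] at hdescent
  linarith
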